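/- Let G be a partial 2-tree (a subgraph of a 2-tree; equivalently, a series-parallel graph). Then there exist a straight-line plane drawing p of G and a 1-string representation of G in which every arc is an L-shape and which is order-preserving with respect to p. -/

import Mathlib

/-- An arc: an injective continuous map from `[0,1]` to `ℝ²`
(formalized as a map `ℝ → ℝ × ℝ` that is continuous and injective on `[0,1]`). -/
structure Arc where
  toFun : ℝ → ℝ × ℝ
  contOn : ContinuousOn toFun (Set.Icc 0 1)
  injOn : Set.InjOn toFun (Set.Icc 0 1)

/-- The image of an arc. -/
def Arc.img (γ : Arc) : Set (ℝ × ℝ) := γ.toFun '' Set.Icc 0 1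

/-- The endpoints of an arc. -/
def Arc.ends (γ : Arc) : Set (ℝ × ℝ) := {γ.toFun 0, γ.toFun 1}

/-- Two arcs cross properly at `q`: `q` is an interior point of both arcs, and there is
an open neighbourhood of `q` mapped homeomorphically onto the open unit disk with `q ↦ 0`,
taking the first arc to the horizontal diameter and the second to the vertical diameter. -/
def CrossesProperlyAt (γ₁ γ₂ : Arc) (q : ℝ × ℝ) : Prop :=
  (∃ s ∈ Set.Ioo (0:ℝ) 1, γ₁.toFun s = q) ∧
  (∃ t ∈ Set.Ioo (0:ℝ) 1, γ₂.toFun t = q) ∧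
  ∃ h : PartialHomeomorph (ℝ × ℝ) (ℝ × ℝ),
    q ∈ h.source ∧ h.target = Metric.ball (0 : ℝ × ℝ) 1 ∧ h q = 0 ∧
    h '' (h.source ∩ γ₁.img) = {z : ℝ × ℝ | z ∈ Metric.ball (0 : ℝ × ℝ) 1 ∧ z.2 = 0} ∧
    h '' (h.source ∩ γ₂.img) = {z : ℝ × ℝ | z ∈ Metric.ball (0 : ℝ × ℝ) 1 ∧ z.1 = 0}

/-- A 1-string representation of a simple graph `G`. -/
structure OneStringRep {V : Type} (G : SimpleGraph V) where
  γ : V → Arc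
  adj_inter : ∀ u v : V, G.Adj u v → ∃ q : ℝ × ℝ, (γ u).img ∩ (γ v).img = {q}
  nonadj_disjoint : ∀ u v : V, u ≠ v → ¬G.Adj u v → (γ u).img ∩ (γ v).img = ∅
  proper : ∀ u v : V, u ≠ v → ∀ q ∈ (γ u).img ∩ (γ v).img, CrossesProperlyAt (γ u) (γ v) q
  no_triple : ∀ u v w : V, u ≠ v → u ≠ w → v ≠ w → (γ u).img ∩ (γ v).img ∩ (γ w).img = ∅

/-- A straight-line plane drawing of a simple graph. -/
def IsPlaneDrawing {V : Type} (G : SimpleGraph V) (p : V → ℝ × ℝ) : Prop :=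
  Function.Injective p ∧
  (∀ u v x y : V, G.Adj u v → G.Adj x y → u ≠ x → u ≠ y → v ≠ x → v ≠ y →
    segment ℝ (p u) (p v) ∩ segment ℝ (p x) (p y) = ∅) ∧
  (∀ u v w : V, G.Adj u v → G.Adj u w → v ≠ w →
    segment ℝ (p u) (p v) ∩ segment ℝ (p u) (p w) = {p u}) ∧
  (∀ u v w : V, G.Adj u v → w ≠ u → w ≠ v → p w ∉ segment ℝ (p u) (p v))

/-- The angle of the vector from `a` to `b`. -/
noncomputable def angleAt (a b : ℝ × ℝ) : ℝ := Complex.arg ⟨b.1 - a.1, b.2 - a.2⟩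

/-- A 1-string representation is order-preserving w.r.t. a straight-line plane drawing `p`:
for each vertex `v`, listing the neighbours `w₁, …, w_k` sorted by the angle of `p wᵢ - p v`,
there are a traversal direction of `γ v` and a cyclic rotation of the list such that the
intersection points of `γ v` with the `γ wᵢ` occur along `γ v`, in that traversal direction,
exactly in the rotated order. -/
def OrderPreserving {V : Type} (G : SimpleGraph V) (p : V → ℝ × ℝ)
    (R : OneStringRep G) : Prop :=
  ∀ v : V, ∃ l : List V,
    l.Nodup ∧ (∀ w : V, w ∈ l ↔ G.Adj v w) ∧
    l.Pairwise (fun w w' => angleAt (p v) (p w) < angleAt (p v) (p w')) ∧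
    ∃ (r : ℕ) (dir : Bool) (t : V → ℝ),
      (∀ w ∈ l, t w ∈ Set.Icc (0:ℝ) 1 ∧ (R.γ v).toFun (t w) ∈ (R.γ w).img) ∧
      (l.rotate r).Pairwise (fun w w' => if dir then t w < t w' else t w' < t w)

/-- The union of the images of a family of arcs. -/
def arcUnion {V : Type} (γ : V → Arc) : Set (ℝ × ℝ) := ⋃ v, (γ v).img

/-- The contour of a family of arcs: the unbounded connected component of the complement of
the union of the images (formalized as the union of all unbounded connected components). -/
def contour {V : Type} (γ : V → Arc) : Set (ℝ × ℝ) :=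
  {x | x ∈ (arcUnion γ)ᶜ ∧ ¬ Bornology.IsBounded (connectedComponentIn (arcUnion γ)ᶜ x)}

/-- A `k`-tree: there is an ordering of the vertices such that the first `k` form a clique and
every later vertex has exactly `k` earlier neighbours, which form a clique. -/
def IsKTree {V : Type} (k : ℕ) (G : SimpleGraph V) : Prop :=
  ∃ (n : ℕ) (e : V ≃ Fin n), k ≤ n ∧
    G.IsClique {v : V | (e v).val < k} ∧
    ∀ i : Fin n, k ≤ i.val →
      ∃ S : Finset V, S.card = k ∧
        (∀ w : V, w ∈ S ↔ G.Adj (e.symm i) w ∧ (e w).val < i.val) ∧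
        G.IsClique ↑S

/-- An L-shape: an arc whose image is the union of a vertical segment from `(x, y+h)` to
`(x, y)` and a horizontal segment from `(x, y)` to `(x+w, y)` with `w, h > 0`. -/
def IsLShape (γ : Arc) : Prop :=
  ∃ x y w h : ℝ, 0 < w ∧ 0 < h ∧
    γ.img = segment ℝ (x, y + h) (x, y) ∪ segment ℝ (x, y) (x + w, y)

/-- A 1-bend orthogonal arc: its image is a single horizontal or vertical segment, or the
union of a horizontal segment and a vertical segment sharing exactly one endpoint. -/
def IsOneBendOrth (γ : Arc) : Prop :=
  (∃ a b : ℝ × ℝ, a ≠ b ∧ (a.1 = b.1 ∨ a.2 = b.2) ∧ γ.img = segment ℝ a b) ∨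
  (∃ a b c : ℝ × ℝ, a ≠ b ∧ b ≠ c ∧
    ((a.1 = b.1 ∧ b.2 = c.2) ∨ (a.2 = b.2 ∧ b.1 = c.1)) ∧
    γ.img = segment ℝ a b ∪ segment ℝ b c ∧ segment ℝ a b ∩ segment ℝ b c = {b})

/-- A graph is 2-connected if it has at least 3 vertices and deleting any single vertex
leaves a connected graph. -/
def TwoConnected {V : Type} (G : SimpleGraph V) : Prop :=
  3 ≤ Nat.card V ∧ ∀ v : V, ((⊤ : G.Subgraph).deleteVerts {v}).coe.Connected

/-- A partial 2-tree: a graph isomorphic to a subgraph of some 2-tree. -/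
def IsPartialTwoTree {V : Type} (G : SimpleGraph V) : Prop :=
  ∃ (W : Type) (H : SimpleGraph W), IsKTree 2 H ∧
    ∃ g : V ↪ W, ∀ u v : V, G.Adj u v → H.Adj (g u) (g v)

/-
Place the corner of the L-shape of `v` at `(x v, y v)`, and let adjacent vertices `u`, `v` with
`x u < x v` satisfy `y v < y u`, so that the horizontal arm of `u` meets the vertical arm of `v` at
`(x v, y u)`. Draw `G` with edges ascending from left corner to right corner: then, along the
L-shape of `v`, the neighbours met on the vertical arm are those below `v` in the drawing and the
neighbours met on the horizontal arm are those above `v`.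

A 2-tree grows by attaching a vertex to an edge `ab`, say with `x a < x b`. Its corner goes just
left of the corner of `b` and just below that of `a`, so that it becomes the neighbour of `a` met
just before `b` and the neighbour of `b` met just after `a`. In the drawing the new vertex goes near
the midpoint of `ab`, slightly to its right, which gives it the same places in the angular orders at
`a` and `b`. A subgraph inherits both corners and drawing.
-/

open Filter Topology

section LinearOrder

variable {ι α : Type*} [LinearOrder α]

/-- `m` lies below `b`, but above all values of `f` below `b`: the order relations between `m` and
the values of `f` are those of a left neighbour of `b`. -/
structure JustBelow (f : ι → α) (m b : α) : Prop where
  lt : m < b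
  lt_of_lt : ∀ i, f i < b → f i < m

namespace JustBelow

variable {f : ι → α} {m b : α} (h : JustBelow f m b) {i : ι}

include h

theorem apply_lt_iff : f i < m ↔ f i < b :=
  ⟨fun hi => hi.trans h.lt, h.lt_of_lt i⟩

theorem lt_apply_iff : m < f i ↔ b ≤ f i :=
  ⟨fun hi => not_lt.1 fun hb => (h.lt_of_lt i hb).asymm hi, h.lt.trans_le⟩

theorem ne_apply : m ≠ f i := by
  rintro rfl
  exact (h.lt_of_lt i h.lt).false

end JustBelow

variable [DenselyOrdered α] [NoMinOrder α] [NoMaxOrder α] [Finite ι]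

theorem exists_justBelow (f : ι → α) (b : α) : ∃ m, JustBelow f m b := by
  have : Nonempty α := ⟨b⟩
  have hfin : (f '' {i | f i < b}).Finite := Set.toFinite _
  obtain ⟨m, hm, hmb⟩ := Order.exists_between_finsets hfin.toFinset {b} (by simp)
  simp only [Set.Finite.mem_toFinset, Set.forall_mem_image, Finset.mem_singleton, forall_eq]
    at hm hmb
  exact ⟨m, hmb, fun i => @hm i⟩

theorem exists_forall_lt_and_forall_le_imp_exists_le [Nonempty α] (f : ι → α) (s : Set ι) :
    ∃ r, (∀ i ∈ s, f i < r) ∧ ∀ i, f i ≤ r → ∃ j ∈ s, f i ≤ f j := by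
  have hlo : (f '' s).Finite := Set.toFinite _
  have hhi : (f '' {i | ∀ j ∈ s, f j < f i}).Finite := Set.toFinite _
  obtain ⟨r, hr, hr'⟩ :=
    Order.exists_between_finsets hlo.toFinset hhi.toFinset (by simp +contextual)
  simp only [Set.Finite.mem_toFinset, Set.forall_mem_image] at hr hr'
  refine ⟨r, fun i => @hr i, fun i hi => ?_⟩
  by_contra! hs
  exact (hr' hs).not_ge hi

end LinearOrder

section PlaneGeometry

/-- Twice the signed area of the triangle `P Q R`, positive when the triangle is oriented
counterclockwise. -/
def ccw (P Q R : ℝ × ℝ) : ℝ :=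
  (Q.1 - P.1) * (R.2 - P.2) - (Q.2 - P.2) * (R.1 - P.1)

variable {P Q R : ℝ × ℝ}

theorem ccw_swap_right (P Q R : ℝ × ℝ) : ccw P R Q = -ccw P Q R := by
  unfold ccw
  ring

theorem ccw_rotate (P Q R : ℝ × ℝ) : ccw Q R P = ccw P Q R := by
  unfold ccw
  ring

theorem ccw_midpoint (P Q R : ℝ × ℝ) : ccw P (midpoint ℝ P Q) R = ccw P Q R / 2 := by
  simp only [ccw, midpoint_eq_smul_add, Prod.smul_fst, Prod.fst_add, Prod.smul_snd, Prod.snd_add,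
    smul_eq_mul, invOf_eq_inv]
  ring

@[fun_prop]
theorem continuous_ccw_middle (P R : ℝ × ℝ) : Continuous fun Q => ccw P Q R := by
  unfold ccw
  fun_prop

theorem arg_lt_arg_of_cross_pos {z w : ℂ} (h : z.arg - w.arg ≤ Real.pi)
    (hc : 0 < z.re * w.im - z.im * w.re) : z.arg < w.arg := by
  by_contra! hle
  have hsin : 0 ≤ Real.sin (z.arg - w.arg) :=
    Real.sin_nonneg_of_nonneg_of_le_pi (sub_nonneg.2 hle) h
  have hcross : z.re * w.im - z.im * w.re = -(‖z‖ * ‖w‖ * Real.sin (z.arg - w.arg)) := by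
    rw [Real.sin_sub, ← Complex.norm_mul_cos_arg z, ← Complex.norm_mul_sin_arg z,
      ← Complex.norm_mul_cos_arg w, ← Complex.norm_mul_sin_arg w]
    ring
  exact hc.not_ge (hcross ▸ neg_nonpos.2 (by positivity))

theorem angleAt_neg_iff : angleAt P Q < 0 ↔ Q.2 < P.2 :=
  Complex.arg_neg_iff.trans sub_neg

theorem angleAt_nonneg_iff : 0 ≤ angleAt P Q ↔ P.2 ≤ Q.2 :=
  Complex.arg_nonneg_iff.trans sub_nonneg

theorem angleAt_lt_angleAt_of_lt_of_le (hQ : Q.2 < P.2) (hR : P.2 ≤ R.2) :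
    angleAt P Q < angleAt P R :=
  (angleAt_neg_iff.2 hQ).trans_le (angleAt_nonneg_iff.2 hR)

theorem angleAt_lt_angleAt_of_ccw_pos (h : Q.2 < P.2 ∨ P.2 ≤ R.2) (hc : 0 < ccw P Q R) :
    angleAt P Q < angleAt P R := by
  refine arg_lt_arg_of_cross_pos ?_ hc
  change angleAt P Q - angleAt P R ≤ Real.pi
  have hQ : angleAt P Q ≤ Real.pi := Complex.arg_le_pi _
  have hR : -Real.pi < angleAt P R := Complex.neg_pi_lt_arg _
  rcases h with h | h
  · linarith [angleAt_neg_iff.2 h]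
  · linarith [angleAt_nonneg_iff.2 h]

theorem angleAt_eq_of_mem_segment {z : ℝ × ℝ} (hz : z ∈ segment ℝ P Q) (hzP : z ≠ P) :
    angleAt P z = angleAt P Q := by
  rw [segment_eq_image'] at hz
  obtain ⟨t, ⟨ht, -⟩, rfl⟩ := hz
  have htpos : 0 < t := ht.lt_of_ne (by rintro rfl; simp at hzP)
  rw [angleAt, angleAt, ← Complex.arg_real_mul ⟨Q.1 - P.1, Q.2 - P.2⟩ htpos]
  congr 1
  apply Complex.ext <;> simp

theorem segment_inter_segment_of_angleAt_ne (h : angleAt P Q ≠ angleAt P R) :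
    segment ℝ P Q ∩ segment ℝ P R = {P} := by
  refine Set.Subset.antisymm (fun z ⟨hzQ, hzR⟩ => ?_)
    (Set.singleton_subset_iff.2 ⟨left_mem_segment .., left_mem_segment ..⟩)
  by_contra hzP
  exact h ((angleAt_eq_of_mem_segment hzQ hzP).symm.trans (angleAt_eq_of_mem_segment hzR hzP))

theorem midpoint_snd_mem_Ioo (h : P.2 < Q.2) : (midpoint ℝ P Q).2 ∈ Set.Ioo P.2 Q.2 := by
  simp only [midpoint_eq_smul_add, Prod.smul_snd, Prod.snd_add, smul_eq_mul, invOf_eq_inv]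
  constructor <;> linarith

theorem frequently_nhds_midpoint_ccw_pos (h : P.2 < Q.2) :
    ∃ᶠ c in 𝓝 (midpoint ℝ P Q), 0 < ccw P c Q := by
  have hlim : Tendsto (fun η : ℝ => midpoint ℝ P Q + (η, 0)) (𝓝[>] 0) (𝓝 (midpoint ℝ P Q)) :=
    (Continuous.tendsto' (by fun_prop) 0 _ (by simp)).mono_left nhdsWithin_le_nhds
  refine hlim.frequently (Eventually.frequently ?_)
  filter_upwards [self_mem_nhdsWithin] with η (hη : 0 < η)
  have hccw : ccw P (midpoint ℝ P Q + (η, 0)) Q = η * (Q.2 - P.2) := by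
    simp only [ccw, midpoint_eq_smul_add, Prod.smul_fst, Prod.fst_add, Prod.smul_snd, Prod.snd_add,
      smul_eq_mul, invOf_eq_inv]
    ring
  exact hccw ▸ mul_pos hη (sub_pos.2 h)

end PlaneGeometry

section Segment

variable {E : Type*} [AddCommGroup E] [Module ℝ E] {a b : E}

theorem segment_midpoint_subset (a b : E) : segment ℝ a (midpoint ℝ a b) ⊆ segment ℝ a b :=
  (convex_segment a b).segment_subset (left_mem_segment ℝ a b) (midpoint_mem_segment a b)

theorem right_notMem_segment_midpoint (h : a ≠ b) : b ∉ segment ℝ a (midpoint ℝ a b) := by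
  intro hb
  rw [mem_segment_iff_wbtw] at hb
  exact (sbtw_midpoint_of_ne ℝ h).ne_right
    ((wbtw_swap_right_iff ℝ a).1 ⟨wbtw_midpoint ℝ a b, hb⟩)

variable [TopologicalSpace E] [IsTopologicalAddGroup E] [ContinuousSMul ℝ E]

theorem isCompact_segment (a b : E) : IsCompact (segment ℝ a b) := by
  rw [segment_eq_image_lineMap]
  exact isCompact_Icc.image AffineMap.lineMap_continuous

theorem eventually_disjoint_segment {S : Set E} (hS : IsClosed S)
    (h : Disjoint (segment ℝ a b) S) : ∀ᶠ c in 𝓝 b, Disjoint (segment ℝ a c) S := by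
  simp only [segment_eq_image_lineMap, Set.disjoint_left, Set.forall_mem_image] at h ⊢
  refine isCompact_Icc.eventually_forall_of_forall_eventually fun t ht => ?_
  have hcont : Continuous fun z : E × ℝ => AffineMap.lineMap a z.1 z.2 := by
    simp only [AffineMap.lineMap_apply_module]
    fun_prop
  exact (hcont.tendsto (b, t)).eventually (hS.isOpen_compl.mem_nhds (h ht))

end Segment

section PlaneDrawing

variable {V W : Type} {G : SimpleGraph V} {H : SimpleGraph W} {p : V → ℝ × ℝ}

/- With every vertex on an edge, a vertex of an edge `e` lying on an edge `f` is a point common to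
`e` and `f`; so conditions on pairs of edges suffice. -/
theorem isPlaneDrawing_of_forall_adj (hadj : ∀ v, ∃ w, G.Adj v w)
    (hne : ∀ u v, G.Adj u v → p u ≠ p v)
    (hindep : ∀ u v x y, G.Adj u v → G.Adj x y → u ≠ x → u ≠ y → v ≠ x → v ≠ y →
      Disjoint (segment ℝ (p u) (p v)) (segment ℝ (p x) (p y)))
    (hstar : ∀ u v w, G.Adj u v → G.Adj u w → v ≠ w →
      segment ℝ (p u) (p v) ∩ segment ℝ (p u) (p w) = {p u}) :
    IsPlaneDrawing G p := by
  have hstar_notMem : ∀ u v w, G.Adj u v → G.Adj u w → w ≠ v → p w ∉ segment ℝ (p u) (p v) := by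
    intro u v w huv huw hwv hw
    have hwu : p w ∈ ({p u} : Set (ℝ × ℝ)) :=
      hstar u v w huv huw hwv.symm ▸ ⟨hw, right_mem_segment ..⟩
    exact hne u w huw hwu.symm
  have hnotMem : ∀ u v w, G.Adj u v → w ≠ u → w ≠ v → p w ∉ segment ℝ (p u) (p v) := by
    intro u v w huv hwu hwv hw
    obtain ⟨w', hww'⟩ := hadj w
    by_cases hu : w' = u
    · exact hstar_notMem u v w huv (hu ▸ hww'.symm) hwv hw
    by_cases hv : w' = v
    · exact hstar_notMem v u w huv.symm (hv ▸ hww'.symm) hwu (segment_symm ℝ (p u) (p v) ▸ hw)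
    exact (hindep u v w w' huv hww' hwu.symm (Ne.symm hu) hwv.symm (Ne.symm hv)).notMem_of_mem_left
      hw (left_mem_segment ..)
  refine ⟨fun u v huv => ?_, fun u v x y huv hxy h₁ h₂ h₃ h₄ =>
    (hindep u v x y huv hxy h₁ h₂ h₃ h₄).inter_eq, hstar, hnotMem⟩
  by_contra hne_uv
  obtain ⟨u', huu'⟩ := hadj u
  by_cases hv : u' = v
  · exact hne u u' huu' (hv ▸ huv)
  · exact hnotMem u u' v huu' (Ne.symm hne_uv) (Ne.symm hv) (huv ▸ left_mem_segment ..)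

theorem IsPlaneDrawing.comap {p : W → ℝ × ℝ} (hp : IsPlaneDrawing H p) (f : G →g H)
    (hf : Function.Injective f) : IsPlaneDrawing G (p ∘ f) := by
  obtain ⟨hinj, hindep, hstar, hnotMem⟩ := hp
  exact ⟨hinj.comp hf,
    fun u v x y huv hxy h₁ h₂ h₃ h₄ => hindep _ _ _ _ (f.map_adj huv) (f.map_adj hxy)
      (hf.ne h₁) (hf.ne h₂) (hf.ne h₃) (hf.ne h₄),
    fun u v w huv huw hvw => hstar _ _ _ (f.map_adj huv) (f.map_adj huw) (hf.ne hvw),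
    fun u v w huv hwu hwv => hnotMem _ _ _ (f.map_adj huv) (hf.ne hwu) (hf.ne hwv)⟩

theorem orderPreserving_of_forall_lt [Finite V] (R : OneStringRep G) (t : V → V → ℝ)
    (ht : ∀ v w, G.Adj v w → t v w ∈ Set.Icc (0 : ℝ) 1 ∧ (R.γ v).toFun (t v w) ∈ (R.γ w).img)
    (hlt : ∀ v w w', G.Adj v w → G.Adj v w' → t v w < t v w' →
      angleAt (p v) (p w) < angleAt (p v) (p w')) :
    OrderPreserving G p R := by
  classical
  have := Fintype.ofFinite V
  intro v
  have hinj : ∀ w w', G.Adj v w → G.Adj v w' → t v w = t v w' → w = w' := by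
    intro w w' hw hw' h
    by_contra hww'
    refine (R.no_triple v w w' hw.ne hw'.ne hww').subset
      ⟨⟨⟨_, (ht v w hw).1, rfl⟩, (ht v w hw).2⟩, ?_⟩
    exact h ▸ (ht v w' hw').2
  let r : V → V → Prop := fun w w' => t v w ≤ t v w'
  have : Std.Total r := ⟨fun _ _ => le_total _ _⟩
  have : IsTrans V r := ⟨fun _ _ _ => le_trans⟩
  let l := (Finset.univ.filter (G.Adj v)).toList.insertionSort r
  have hmem : ∀ w, w ∈ l ↔ G.Adj v w := by simp [l]
  have hnodup : l.Nodup := (List.perm_insertionSort r _).nodup_iff.2 (Finset.nodup_toList _)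
  have hsorted : l.Pairwise fun w w' => t v w < t v w' :=
    ((List.pairwise_insertionSort r _).and hnodup).imp_of_mem fun hw hw' h =>
      lt_of_le_of_ne h.1 fun heq => h.2 (hinj _ _ ((hmem _).1 hw) ((hmem _).1 hw') heq)
  exact ⟨l, hnodup, hmem,
    hsorted.imp_of_mem fun hw hw' => hlt v _ _ ((hmem _).1 hw) ((hmem _).1 hw'),
    0, true, t v, fun w hw => ht v w ((hmem w).1 hw), by simpa using hsorted⟩

end PlaneDrawing

theorem image_neighborSet_none_comap {ι V : Type*} {G : SimpleGraph V} {f : Option ι → V}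
    {S : Set V} (hS : ∀ w, w ∈ S ↔ G.Adj (f none) w ∧ w ∈ Set.range (f ∘ some)) :
    f '' (G.comap f).neighborSet none = S := by
  ext w
  rw [hS]
  constructor
  · rintro ⟨_ | i, hi, rfl⟩
    · exact (SimpleGraph.irrefl _ hi).elim
    · exact ⟨hi, i, rfl⟩
  · rintro ⟨hw, i, rfl⟩
    exact ⟨some i, hw, rfl⟩

namespace IsKTree

theorem exists_adj {V : Type} {G : SimpleGraph V} {k : ℕ} (hk : 2 ≤ k) (hG : IsKTree k G) (v : V) :
    ∃ w, G.Adj v w := by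
  obtain ⟨n, e, hn, hclique, hlater⟩ := hG
  by_cases hv : (e v).val < k
  · have : Nontrivial (Fin k) := Fin.nontrivial_iff_two_le.2 hk
    obtain ⟨j, hj⟩ := exists_ne (⟨e v, hv⟩ : Fin k)
    have hjv : e.symm (j.castLE hn) ≠ v := by
      rw [Ne, e.symm_apply_eq]
      exact fun h => hj (Fin.ext (congrArg (fun i : Fin n => i.val) h))
    exact ⟨_, hclique hv (by simp) hjv.symm⟩
  · obtain ⟨S, hcard, hS, -⟩ := hlater (e v) (not_lt.1 hv)
    obtain ⟨w, hw⟩ := Finset.card_pos.1 (by omega : 0 < S.card)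
    exact ⟨w, e.symm_apply_apply v ▸ ((hS w).1 hw).1⟩

theorem induction {k : ℕ} {P : ∀ {V : Type}, SimpleGraph V → Prop}
    (iso : ∀ {V W : Type} {G : SimpleGraph V} {H : SimpleGraph W}, G ≃g H → P G → P H)
    (top : P (⊤ : SimpleGraph (Fin k)))
    (insert : ∀ {V : Type} [Finite V] (G : SimpleGraph (Option V)),
      (G.neighborSet none).ncard = k → G.IsClique (G.neighborSet none) → P (G.comap some) → P G)
    {V : Type} {G : SimpleGraph V} (hG : IsKTree k G) : P G := by
  obtain ⟨n, e, hkn, hclique, hlater⟩ := hG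
  let initial (m : ℕ) (hm : m ≤ n) : Fin m → V := fun i => e.symm (i.castLE hm)
  have hinitial : ∀ m hm, Function.Injective (initial m hm) := fun m hm =>
    e.symm.injective.comp (Fin.castLE_injective hm)
  have hrange : ∀ m hm w, w ∈ Set.range (initial m hm) ↔ (e w).val < m := fun m hm w =>
    ⟨by rintro ⟨i, rfl⟩; simp [initial], fun h => ⟨⟨e w, h⟩, e.symm_apply_apply w⟩⟩
  suffices h : ∀ m, k ≤ m → ∀ hm : m ≤ n, P (G.comap (initial m hm)) from
    iso (SimpleGraph.Iso.comap e.symm G) (h n hkn le_rfl)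
  intro m hkm
  induction m, hkm using Nat.le_induction with
  | base =>
    intro hm
    convert top
    ext i j
    exact ⟨SimpleGraph.Adj.ne, fun h => hclique ((hrange k hm _).1 ⟨i, rfl⟩)
      ((hrange k hm _).1 ⟨j, rfl⟩) ((hinitial k hm).ne h)⟩
  | succ m hkm ih =>
    intro hm
    let f : Option (Fin m) → V := initial (m + 1) hm ∘ finSuccEquivLast.symm
    have hf : Function.Injective f := (hinitial _ hm).comp finSuccEquivLast.symm.injective
    have hnone : f none = e.symm ⟨m, hm⟩ :=
      congrArg (initial (m + 1) hm) finSuccEquivLast_symm_none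
    have hsome : f ∘ some = initial m (by omega) :=
      funext fun j => congrArg (initial (m + 1) hm) (finSuccEquivLast_symm_some j)
    obtain ⟨S, hcard, hS, hSclique⟩ := hlater ⟨m, hm⟩ hkm
    have himage : f '' (G.comap f).neighborSet none = S :=
      image_neighborSet_none_comap fun w => by rw [Finset.mem_coe, hS, hnone, hsome, hrange]
    refine iso (SimpleGraph.Iso.comap finSuccEquivLast.symm (G.comap (initial (m + 1) hm)))
      (insert (G.comap f) ?_ ?_ ?_)
    · rw [← Set.ncard_image_of_injective _ hf, himage, Set.ncard_coe_finset, hcard]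
    · exact fun o ho o' ho' hoo' => hSclique (himage ▸ Set.mem_image_of_mem f ho)
        (himage ▸ Set.mem_image_of_mem f ho') (hf.ne hoo')
    · rw [SimpleGraph.comap_comap, hsome]
      exact ih (by omega)

end IsKTree

section Crossing

theorem CrossesProperlyAt.symm {γ₁ γ₂ : Arc} {q : ℝ × ℝ} (h : CrossesProperlyAt γ₁ γ₂ q) :
    CrossesProperlyAt γ₂ γ₁ q := by
  obtain ⟨h₁, h₂, e, hq, htarget, heq, himg₁, himg₂⟩ := h
  let e' : PartialHomeomorph (ℝ × ℝ) (ℝ × ℝ) :=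
    { e.toPartialEquiv.transEquiv (Equiv.prodComm ℝ ℝ) with
      continuousOn_toFun := continuous_swap.comp_continuousOn e.continuousOn_toFun
      continuousOn_invFun := e.continuousOn_invFun.comp continuous_swap.continuousOn
        fun _ hz => hz }
  have hswap : ∀ z : ℝ × ℝ, z.swap ∈ Metric.ball (0 : ℝ × ℝ) 1 ↔ z ∈ Metric.ball (0 : ℝ × ℝ) 1 := by
    simp [Prod.norm_def, max_comm]
  have himg : ∀ S, e' '' (e'.source ∩ S) = Prod.swap ⁻¹' (e '' (e.source ∩ S)) := fun S => by
    rw [← Set.image_swap_eq_preimage_swap, Set.image_image]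
    rfl
  refine ⟨h₂, h₁, e', hq, ?_, ?_, ?_, ?_⟩
  · change Prod.swap ⁻¹' e.target = _
    rw [htarget]
    exact Set.ext hswap
  · exact (congrArg Prod.swap heq).trans rfl
  · rw [himg, himg₂]
    exact Set.ext fun z => and_congr_left' (hswap z)
  · rw [himg, himg₁]
    exact Set.ext fun z => and_congr_left' (hswap z)

theorem crossesProperlyAt_of_eventually {γ₁ γ₂ : Arc} {q : ℝ × ℝ}
    (hq₁ : ∃ s ∈ Set.Ioo (0 : ℝ) 1, γ₁.toFun s = q) (hq₂ : ∃ t ∈ Set.Ioo (0 : ℝ) 1, γ₂.toFun t = q)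
    (h₁ : ∀ᶠ z in 𝓝 q, z ∈ γ₁.img ↔ z.2 = q.2) (h₂ : ∀ᶠ z in 𝓝 q, z ∈ γ₂.img ↔ z.1 = q.1) :
    CrossesProperlyAt γ₁ γ₂ q := by
  obtain ⟨ρ, hρ, hball⟩ := Metric.eventually_nhds_iff_ball.1 (h₁.and h₂)
  let e := (OpenPartialHomeomorph.unitBallBall q ρ hρ).symm
  have himg (S : Set (ℝ × ℝ)) : e '' (e.source ∩ S) = e.target ∩ e.symm ⁻¹' S :=
    e.image_source_inter_eq' S
  have hmaps : ∀ z ∈ Metric.ball (0 : ℝ × ℝ) 1, ρ • z + q ∈ Metric.ball q ρ := fun z hz =>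
    e.map_target hz
  refine ⟨hq₁, hq₂, e.toPartialHomeomorph, Metric.mem_ball_self hρ, rfl, ?_, ?_, ?_⟩
  · simp [e]
  · refine (himg _).trans (Set.ext fun z => and_congr_right fun hz => ?_)
    have hiff : ρ • z + q ∈ γ₁.img ↔ z.2 = 0 := by
      simpa [hρ.ne'] using (hball _ (hmaps z hz)).1
    exact hiff
  · refine (himg _).trans (Set.ext fun z => and_congr_right fun hz => ?_)
    have hiff : ρ • z + q ∈ γ₂.img ↔ z.1 = 0 := by
      simpa [hρ.ne'] using (hball _ (hmaps z hz)).2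
    exact hiff

end Crossing

section LArc

/-- The upward vertical ray and the rightward horizontal ray from `(x, y)`, parametrised by the
signed distance `s` from the corner, which is negative on the vertical ray. -/
def lPath (x y s : ℝ) : ℝ × ℝ :=
  (x + max s 0, y + max (-s) 0)

theorem lPath_of_nonneg {s : ℝ} (x y : ℝ) (hs : 0 ≤ s) : lPath x y s = (x + s, y) := by
  simp [lPath, hs]

theorem lPath_of_nonpos {s : ℝ} (x y : ℝ) (hs : s ≤ 0) : lPath x y s = (x, y - s) := by
  simp [lPath, hs, sub_eq_add_neg]

@[fun_prop]
theorem continuous_lPath (x y : ℝ) : Continuous (lPath x y) := by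
  unfold lPath
  fun_prop

theorem lPath_injective (x y : ℝ) : Function.Injective (lPath x y) := by
  have hleft : Function.LeftInverse (fun q => q.1 - x - (q.2 - y)) (lPath x y) := fun s => by
    simp [lPath]
  exact hleft.injective

variable {x y top right : ℝ}

theorem mem_image_lPath_Icc (hy : y < top) (hx : x < right) {q : ℝ × ℝ} :
    q ∈ lPath x y '' Set.Icc (y - top) (right - x) ↔
      q.1 = x ∧ q.2 ∈ Set.Icc y top ∨ q.2 = y ∧ q.1 ∈ Set.Icc x right := by
  constructor
  · rintro ⟨s, ⟨hs, hs'⟩, rfl⟩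
    rcases le_total s 0 with h | h
    · rw [lPath_of_nonpos x y h]
      exact .inl ⟨rfl, by constructor <;> dsimp only <;> linarith⟩
    · rw [lPath_of_nonneg x y h]
      exact .inr ⟨rfl, by constructor <;> dsimp only <;> linarith⟩
  · rintro (⟨hq, hq', hq''⟩ | ⟨hq, hq', hq''⟩)
    · exact ⟨y - q.2, by constructor <;> linarith,
        (lPath_of_nonpos x y (sub_nonpos.2 hq')).trans (Prod.ext hq.symm (by simp))⟩
    · exact ⟨q.1 - x, by constructor <;> linarith,
        (lPath_of_nonneg x y (sub_nonneg.2 hq')).trans (Prod.ext (by simp) hq.symm)⟩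

/-- The L-shape with corner `(x, y)` whose arms reach up to height `top` and right to abscissa
`right`, traversed from its top at constant speed. -/
noncomputable def lArc (x y top right : ℝ) (hy : y < top) (hx : x < right) : Arc where
  toFun := lPath x y ∘ AffineMap.lineMap (y - top) (right - x)
  contOn := ((continuous_lPath x y).comp AffineMap.lineMap_continuous).continuousOn
  injOn := ((lPath_injective x y).comp (AffineMap.lineMap_injective ℝ (by linarith))).injOn

/-- The time at which `lArc x y top right` is at signed distance `s` from its corner. -/
noncomputable def lArcTime (x y top right s : ℝ) : ℝ :=
  (s - (y - top)) / (right - x - (y - top))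

variable (hy : y < top) (hx : x < right)
include hy hx

theorem lineMap_lArcTime (s : ℝ) :
    AffineMap.lineMap (y - top) (right - x) (lArcTime x y top right s) = s := by
  rw [AffineMap.lineMap_apply_ring', lArcTime, div_mul_cancel₀ _ (by linarith), sub_add_cancel]

theorem lArc_toFun_lArcTime (s : ℝ) :
    (lArc x y top right hy hx).toFun (lArcTime x y top right s) = lPath x y s :=
  congrArg (lPath x y) (lineMap_lArcTime hy hx s)

theorem lArcTime_strictMono : StrictMono (lArcTime x y top right) := fun _ _ h =>
  div_lt_div_of_pos_right (sub_lt_sub_right h _) (by linarith)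

theorem lArcTime_mem_Ioo {s : ℝ} (hs : s ∈ Set.Ioo (y - top) (right - x)) :
    lArcTime x y top right s ∈ Set.Ioo (0 : ℝ) 1 := by
  rw [lArcTime, Set.mem_Ioo, div_lt_one (by linarith)]
  exact ⟨div_pos (sub_pos.2 hs.1) (by linarith), sub_lt_sub_right hs.2 _⟩

theorem mem_lArc_img {q : ℝ × ℝ} : q ∈ (lArc x y top right hy hx).img ↔
    q.1 = x ∧ q.2 ∈ Set.Icc y top ∨ q.2 = y ∧ q.1 ∈ Set.Icc x right := by
  rw [← mem_image_lPath_Icc hy hx, Arc.img, lArc, Set.image_comp, ← segment_eq_image_lineMap,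
    segment_eq_Icc (by linarith)]

theorem isLShape_lArc : IsLShape (lArc x y top right hy hx) := by
  refine ⟨x, y, right - x, top - y, sub_pos.2 hx, sub_pos.2 hy, ?_⟩
  rw [add_sub_cancel, add_sub_cancel, ← Prod.image_mk_segment_right, segment_symm,
    ← Prod.image_mk_segment_left, segment_eq_Icc hx.le, segment_eq_Icc hy.le]
  ext q
  rw [mem_lArc_img]
  constructor
  · rintro (⟨h, h'⟩ | ⟨h, h'⟩)
    · exact .inl ⟨q.2, h', Prod.ext h.symm rfl⟩
    · exact .inr ⟨q.1, h', Prod.ext rfl h.symm⟩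
  · rintro (⟨s, hs, rfl⟩ | ⟨s, hs, rfl⟩)
    · exact .inl ⟨rfl, hs⟩
    · exact .inr ⟨rfl, hs⟩

variable {x' y' top' right' : ℝ} (hy' : y' < top') (hx' : x' < right')
include hy' hx'

theorem mem_lArc_img_inter_iff (hxx' : x < x') (hyy' : y ≠ y') {q : ℝ × ℝ} :
    q ∈ (lArc x y top right hy hx).img ∩ (lArc x' y' top' right' hy' hx').img ↔
      q = (x', y) ∧ x' ≤ right ∧ y ∈ Set.Icc y' top' := by
  rw [Set.mem_inter_iff, mem_lArc_img, mem_lArc_img]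
  constructor
  · rintro ⟨⟨h, -⟩ | ⟨h, -, hr⟩, ⟨h', ht⟩ | ⟨h', hr', -⟩⟩
    · exact absurd (h.symm.trans h') hxx'.ne
    · exact absurd hr' (h ▸ hxx'.not_ge)
    · exact ⟨Prod.ext h' h, h' ▸ hr, h ▸ ht⟩
    · exact absurd (h.symm.trans h') hyy'
  · rintro ⟨rfl, hr, ht⟩
    exact ⟨.inr ⟨rfl, hxx'.le, hr⟩, .inl ⟨rfl, ht⟩⟩

theorem crossesProperlyAt_lArc (hxx' : x < x') (hr : x' < right) (hyy' : y' < y) (ht : y < top') :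
    CrossesProperlyAt (lArc x y top right hy hx) (lArc x' y' top' right' hy' hx') (x', y) := by
  refine crossesProperlyAt_of_eventually
    ⟨lArcTime x y top right (x' - x), lArcTime_mem_Ioo hy hx ⟨by linarith, by linarith⟩, ?_⟩
    ⟨lArcTime x' y' top' right' (y' - y), lArcTime_mem_Ioo hy' hx' ⟨by linarith, by linarith⟩, ?_⟩
    ?_ ?_
  · rw [lArc_toFun_lArcTime, lPath_of_nonneg _ _ (by linarith), add_sub_cancel]
  · rw [lArc_toFun_lArcTime, lPath_of_nonpos _ _ (by linarith), sub_sub_cancel]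
  · filter_upwards [continuous_fst.continuousAt.eventually (Ioo_mem_nhds hxx' hr)] with z hz
    rw [mem_lArc_img]
    exact ⟨fun h => (h.resolve_left fun h => hz.1.ne' h.1).1, fun h => .inr ⟨h, hz.1.le, hz.2.le⟩⟩
  · filter_upwards [continuous_snd.continuousAt.eventually (Ioo_mem_nhds hyy' ht)] with z hz
    rw [mem_lArc_img]
    exact ⟨fun h => (h.resolve_right fun h => hz.1.ne' h.1).1, fun h => .inl ⟨h, hz.1.le, hz.2.le⟩⟩

end LArc

/-- Corners of L-shapes, one per vertex of `G`, placed so that lengthening the arms of every L-shape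
just enough to meet those of its neighbours creates no other crossing. Of two adjacent vertices, the
one further left has the higher corner. -/
structure LCorners {V : Type*} (G : SimpleGraph V) where
  x : V → ℝ
  y : V → ℝ
  x_injective : Function.Injective x
  y_injective : Function.Injective y
  y_lt : ∀ {u v}, G.Adj u v → x u < x v → y v < y u
  y_le : ∀ {u v u' v'}, x u < x v → y v < y u → G.Adj u v' → x v < x v' → G.Adj v u' → y u' ≤ y u

namespace LCorners

section Basic

variable {V W : Type*} {G : SimpleGraph V} {H : SimpleGraph W}

/-- Corners for `H` restrict to corners for a graph embedded in `H`. -/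
def comap (L : LCorners H) (f : G →g H) (hf : Function.Injective f) : LCorners G where
  x := L.x ∘ f
  y := L.y ∘ f
  x_injective := L.x_injective.comp hf
  y_injective := L.y_injective.comp hf
  y_lt h := L.y_lt (f.map_adj h)
  y_le hx hy huv' hx' hvu' := L.y_le hx hy (f.map_adj huv') hx' (f.map_adj hvu')

variable (L : LCorners G) {v w w' : V}

theorem x_lt_or_gt_of_adj (h : G.Adj v w) : L.x v < L.x w ∨ L.x w < L.x v :=
  lt_or_gt_of_ne (L.x_injective.ne h.ne)

/-- The signed distance from the corner of the L-shape of `v` to its crossing with the L-shape of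
an adjacent vertex `w`, negative on the vertical arm. -/
noncomputable def sweep (v w : V) : ℝ :=
  if L.x v < L.x w then L.x w - L.x v else L.y v - L.y w

theorem sweep_of_lt (h : L.x v < L.x w) : L.sweep v w = L.x w - L.x v :=
  if_pos h

theorem sweep_of_gt (h : L.x w < L.x v) : L.sweep v w = L.y v - L.y w :=
  if_neg h.not_gt

theorem sweep_pos_iff (h : G.Adj v w) : 0 < L.sweep v w ↔ L.x v < L.x w := by
  rcases L.x_lt_or_gt_of_adj h with hx | hx
  · simp [L.sweep_of_lt hx, hx]
  · rw [L.sweep_of_gt hx, sub_pos]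
    exact iff_of_false (L.y_lt h.symm hx).not_gt hx.not_gt

theorem sweep_injOn_neighborSet (v : V) : Set.InjOn (L.sweep v) (G.neighborSet v) := by
  intro w hw w' hw' h
  by_cases hx : L.x v < L.x w
  · have hx' : L.x v < L.x w' := by rwa [← L.sweep_pos_iff hw', ← h, L.sweep_pos_iff hw]
    rw [L.sweep_of_lt hx, L.sweep_of_lt hx'] at h
    exact L.x_injective (by linarith)
  · have hx' : ¬L.x v < L.x w' := by rwa [← L.sweep_pos_iff hw', ← h, L.sweep_pos_iff hw]
    rw [sweep, if_neg hx, sweep, if_neg hx'] at h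
    exact L.y_injective (by linarith)

theorem lPath_sweep (h : G.Adj v w) : lPath (L.x v) (L.y v) (L.sweep v w) =
    (max (L.x v) (L.x w), max (L.y v) (L.y w)) := by
  rcases L.x_lt_or_gt_of_adj h with hx | hx
  · rw [L.sweep_of_lt hx, lPath_of_nonneg _ _ (sub_nonneg.2 hx.le), max_eq_right hx.le,
      max_eq_left (L.y_lt h hx).le, add_sub_cancel]
  · rw [L.sweep_of_gt hx, lPath_of_nonpos _ _ (sub_nonpos.2 (L.y_lt h.symm hx).le),
      max_eq_left hx.le, max_eq_right (L.y_lt h.symm hx).le, sub_sub_cancel]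

end Basic

section Representation

variable {V : Type} [Finite V] {G : SimpleGraph V} (L : LCorners G) {u v w : V} {q : ℝ × ℝ}

/-- A coordinate exceeding the value of `f` at `v` and at the neighbours of `v`, but no further
value of `f`. -/
noncomputable def armEnd (G : SimpleGraph V) (f : V → ℝ) (v : V) : ℝ :=
  (exists_forall_lt_and_forall_le_imp_exists_le f (insert v (G.neighborSet v))).choose

theorem lt_armEnd_self (G : SimpleGraph V) (f : V → ℝ) (v : V) : f v < armEnd G f v :=
  (exists_forall_lt_and_forall_le_imp_exists_le f _).choose_spec.1 v (Set.mem_insert ..)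

theorem lt_armEnd_of_adj (f : V → ℝ) (h : G.Adj v w) : f w < armEnd G f v :=
  (exists_forall_lt_and_forall_le_imp_exists_le f _).choose_spec.1 w (Set.mem_insert_of_mem _ h)

theorem exists_adj_of_le_armEnd {f : V → ℝ} (hvw : f v < f w) (h : f w ≤ armEnd G f v) :
    ∃ w', G.Adj v w' ∧ f w ≤ f w' := by
  obtain ⟨w', rfl | hw', hle⟩ :=
    (exists_forall_lt_and_forall_le_imp_exists_le f _).choose_spec.2 w h
  · exact absurd hle hvw.not_ge
  · exact ⟨w', hw', hle⟩

/-- The L-shape of `v`. -/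
noncomputable def arc (v : V) : Arc :=
  lArc (L.x v) (L.y v) (armEnd G L.y v) (armEnd G L.x v) (lt_armEnd_self ..) (lt_armEnd_self ..)

theorem adj_of_le_armEnd (hx : L.x u < L.x v) (hy : L.y v < L.y u) (hr : L.x v ≤ armEnd G L.x u)
    (ht : L.y u ≤ armEnd G L.y v) : G.Adj u v := by
  obtain ⟨v', huv', hv'⟩ := exists_adj_of_le_armEnd hx hr
  obtain ⟨u', hvu', hu'⟩ := exists_adj_of_le_armEnd hy ht
  rcases hv'.eq_or_lt with hv' | hv'
  · rwa [L.x_injective hv']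
  · rw [L.y_injective (hu'.antisymm (L.y_le hx hy huv' hv' hvu'))]
    exact hvu'.symm

theorem mem_arc_img_inter_iff_of_lt (hx : L.x u < L.x v) :
    q ∈ (L.arc u).img ∩ (L.arc v).img ↔ G.Adj u v ∧ q = (L.x v, L.y u) := by
  have hne : L.y u ≠ L.y v := L.y_injective.ne (ne_of_apply_ne L.x hx.ne)
  rw [arc, arc, mem_lArc_img_inter_iff _ _ _ _ hx hne, and_comm]
  refine and_congr_left' ⟨fun ⟨hr, hy, ht⟩ => L.adj_of_le_armEnd hx (hy.lt_of_ne' hne) hr ht,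
    fun h => ⟨(lt_armEnd_of_adj _ h).le, (L.y_lt h hx).le, (lt_armEnd_of_adj _ h.symm).le⟩⟩

theorem mem_arc_img_inter_iff (huv : u ≠ v) : q ∈ (L.arc u).img ∩ (L.arc v).img ↔
    G.Adj u v ∧ q = (max (L.x u) (L.x v), max (L.y u) (L.y v)) := by
  wlog hx : L.x u < L.x v generalizing u v
  · rw [Set.inter_comm, this huv.symm ((L.x_injective.ne huv).lt_or_gt.resolve_left hx),
      G.adj_comm, max_comm (L.x v), max_comm (L.y v)]
  · rw [L.mem_arc_img_inter_iff_of_lt hx]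
    exact and_congr_right fun h => by rw [max_eq_right hx.le, max_eq_left (L.y_lt h hx).le]

theorem crossesProperlyAt_arc (huv : u ≠ v) (hq : q ∈ (L.arc u).img ∩ (L.arc v).img) :
    CrossesProperlyAt (L.arc u) (L.arc v) q := by
  wlog hx : L.x u < L.x v generalizing u v
  · exact (this huv.symm hq.symm ((L.x_injective.ne huv).lt_or_gt.resolve_left hx)).symm
  · obtain ⟨h, rfl⟩ := (L.mem_arc_img_inter_iff_of_lt hx).1 hq
    exact crossesProperlyAt_lArc _ _ _ _ hx (lt_armEnd_of_adj _ h) (L.y_lt h hx)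
      (lt_armEnd_of_adj _ h.symm)

theorem arc_img_inter_inter_eq_empty (huv : u ≠ v) (huw : u ≠ w) (hvw : v ≠ w) :
    (L.arc u).img ∩ (L.arc v).img ∩ (L.arc w).img = ∅ := by
  refine Set.eq_empty_of_forall_notMem fun q ⟨⟨hu, hv⟩, hw⟩ => ?_
  have hquv := congrArg Prod.fst ((L.mem_arc_img_inter_iff huv).1 ⟨hu, hv⟩).2
  have hquw := congrArg Prod.fst ((L.mem_arc_img_inter_iff huw).1 ⟨hu, hw⟩).2
  have hqvw := congrArg Prod.fst ((L.mem_arc_img_inter_iff hvw).1 ⟨hv, hw⟩).2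
  grind [L.x_injective.ne huv, L.x_injective.ne huw, L.x_injective.ne hvw]

/-- The 1-string representation of `G` by L-shapes with the given corners. -/
noncomputable def rep : OneStringRep G where
  γ := L.arc
  adj_inter _ _ h := ⟨_, Set.ext fun _ => (L.mem_arc_img_inter_iff h.ne).trans (and_iff_right h)⟩
  nonadj_disjoint _ _ huv h := Set.eq_empty_of_forall_notMem fun _ hq =>
    h ((L.mem_arc_img_inter_iff huv).1 hq).1
  proper _ _ huv _ hq := L.crossesProperlyAt_arc huv hq
  no_triple _ _ _ huv huw hvw := L.arc_img_inter_inter_eq_empty huv huw hvw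

theorem isLShape_rep (v : V) : IsLShape (L.rep.γ v) :=
  isLShape_lArc (lt_armEnd_self ..) (lt_armEnd_self ..)

/-- The time at which the L-shape of `v` crosses that of an adjacent vertex `w`. -/
noncomputable def crossingTime (v w : V) : ℝ :=
  lArcTime (L.x v) (L.y v) (armEnd G L.y v) (armEnd G L.x v) (L.sweep v w)

theorem crossingTime_lt_iff : L.crossingTime u v < L.crossingTime u w ↔ L.sweep u v < L.sweep u w :=
  (lArcTime_strictMono (lt_armEnd_self ..) (lt_armEnd_self ..)).lt_iff_lt

theorem sweep_mem_Ioo (h : G.Adj v w) :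
    L.sweep v w ∈ Set.Ioo (L.y v - armEnd G L.y v) (armEnd G L.x v - L.x v) := by
  have hxv := lt_armEnd_self G L.x v
  have hyv := lt_armEnd_self G L.y v
  rcases L.x_lt_or_gt_of_adj h with hx | hx
  · rw [L.sweep_of_lt hx]
    constructor <;> linarith [lt_armEnd_of_adj L.x h]
  · rw [L.sweep_of_gt hx]
    constructor <;> linarith [lt_armEnd_of_adj L.y h, L.y_lt h.symm hx]

theorem crossingTime_mem_Icc (h : G.Adj v w) : L.crossingTime v w ∈ Set.Icc (0 : ℝ) 1 :=
  Set.Ioo_subset_Icc_self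
    (lArcTime_mem_Ioo (lt_armEnd_self ..) (lt_armEnd_self ..) (L.sweep_mem_Ioo h))

theorem rep_crossingTime_mem (h : G.Adj v w) :
    (L.rep.γ v).toFun (L.crossingTime v w) ∈ (L.rep.γ w).img := by
  have hpoint : (L.rep.γ v).toFun (L.crossingTime v w) =
      (max (L.x v) (L.x w), max (L.y v) (L.y w)) :=
    (lArc_toFun_lArcTime (lt_armEnd_self ..) (lt_armEnd_self ..) _).trans (L.lPath_sweep h)
  exact ((L.mem_arc_img_inter_iff h.ne).2 ⟨h, hpoint⟩).2

end Representation

end LCorners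

section Attachment

variable {V : Type*} {G : SimpleGraph (Option V)} {a b : V}

/-- The vertex `none` of `G` is attached to the edge joining `a` and `b`: it has no neighbours other
than `a` and `b`. -/
structure IsAttached (G : SimpleGraph (Option V)) (a b : V) : Prop where
  adj : (G.comap some).Adj a b
  eq_or_eq : ∀ {w}, G.Adj none (some w) → w = a ∨ w = b

theorem IsAttached.symm (h : IsAttached G a b) : IsAttached G b a :=
  ⟨h.adj.symm, fun hw => (h.eq_or_eq hw).symm⟩

theorem exists_isAttached (hcard : (G.neighborSet none).ncard = 2)
    (hclique : G.IsClique (G.neighborSet none)) : ∃ a b, IsAttached G a b := by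
  obtain ⟨o, o', hne, ho⟩ := Set.ncard_eq_two.1 hcard
  have hadj : G.Adj none o := ho.symm.subset (Set.mem_insert ..)
  have hadj' : G.Adj none o' := ho.symm.subset (Set.mem_insert_of_mem _ rfl)
  obtain ⟨a, rfl⟩ := Option.ne_none_iff_exists'.1 hadj.ne'
  obtain ⟨b, rfl⟩ := Option.ne_none_iff_exists'.1 hadj'.ne'
  refine ⟨a, b, hclique hadj hadj' hne, fun {w} hw => ?_⟩
  have hw' : some w ∈ ({some a, some b} : Set (Option V)) := ho.subset hw
  simpa using hw'

end Attachment

theorem option_elim_injective {ι α : Type*} {f : ι → α} {m : α} (hf : Function.Injective f)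
    (hm : ∀ i, m ≠ f i) : Function.Injective fun o : Option ι => o.elim m f
  | none, none, _ => rfl
  | none, some i, h => absurd h (hm i)
  | some i, none, h => absurd h.symm (hm i)
  | some _, some _, h => congrArg some (hf h)

namespace LCorners

section Insertion

variable {V : Type*} {G : SimpleGraph (Option V)} {a b : V} (L : LCorners (G.comap some))
  (hG : IsAttached G a b) (hab : L.x a < L.x b)
include hG

theorem eq_left_of_adj_none {w : V} (h : G.Adj none (some w)) (hw : L.x w < L.x b) : w = a :=
  (hG.eq_or_eq h).resolve_right (by rintro rfl; exact hw.false)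

include hab

theorem eq_right_of_adj_none {w : V} (h : G.Adj none (some w)) (hw : L.x b ≤ L.x w) : w = b :=
  (hG.eq_or_eq h).resolve_left (by rintro rfl; exact hw.not_gt hab)

variable {m n : ℝ} (hm : JustBelow L.x m (L.x b)) (hn : JustBelow L.y n (L.y a))
include hm hn

theorem option_elim_y_le {u v u' v' : Option V} (hx : u.elim m L.x < v.elim m L.x)
    (hy : v.elim n L.y < u.elim n L.y) (huv' : G.Adj u v') (hx' : v.elim m L.x < v'.elim m L.x)
    (hvu' : G.Adj v u') : u'.elim n L.y ≤ u.elim n L.y := by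
  have hba := L.y_lt hG.adj hab
  rcases u with _ | u <;> rcases v with _ | v <;> rcases u' with _ | u' <;> rcases v' with _ | v'
  case none.some.none.some | none.some.some.some =>
    obtain rfl := L.eq_right_of_adj_none hG hab huv' (hm.lt_apply_iff.1 (hx.trans hx'))
    exact absurd (hm.lt_apply_iff.1 hx) hx'.not_ge
  case some.none.some.some =>
    have hau := hn.lt_apply_iff.1 hy
    rcases hG.eq_or_eq hvu' with rfl | rfl
    · exact hau
    · exact hba.le.trans hau
  case some.some.none.some =>
    rcases hG.eq_or_eq hvu'.symm with rfl | rfl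
    · exact (hn.lt.trans hy).le
    · exact hn.lt.le.trans (L.y_le hx hy huv' hx' hG.adj.symm)
  case some.some.some.none =>
    obtain rfl := L.eq_left_of_adj_none hG huv'.symm (hm.apply_lt_iff.1 (hx.trans hx'))
    exact L.y_le hx hy hG.adj (hm.apply_lt_iff.1 hx') hvu'
  case some.some.none.none =>
    obtain rfl := L.eq_left_of_adj_none hG huv'.symm (hm.apply_lt_iff.1 (hx.trans hx'))
    exact hn.lt.le
  case some.some.some.some => exact L.y_le hx hy huv' hx' hvu'
  all_goals simp_all

/-- The extension of the corners to a new vertex attached to the edge joining `a` and `b`, with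
corner just left of that of `b` and just below that of `a`, so that its L-shape meets the horizontal
arm of `a` and the vertical arm of `b`. -/
def insert : LCorners G where
  x o := o.elim m L.x
  y o := o.elim n L.y
  x_injective := option_elim_injective L.x_injective fun _ => hm.ne_apply
  y_injective := option_elim_injective L.y_injective fun _ => hn.ne_apply
  y_lt := by
    rintro (_ | u) (_ | v) h hx
    · exact absurd h (SimpleGraph.irrefl _)
    · obtain rfl := L.eq_right_of_adj_none hG hab h (hm.lt_apply_iff.1 hx)
      exact hn.lt_of_lt _ (L.y_lt hG.adj hab)
    · obtain rfl := L.eq_left_of_adj_none hG h.symm (hm.apply_lt_iff.1 hx)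
      exact hn.lt
    · exact L.y_lt h hx
  y_le := L.option_elim_y_le hG hab hm hn

end Insertion

end LCorners

/-- Corners for `G` together with a drawing of `G` in which every edge ascends from left to right
corner and the neighbours of a vertex are arranged around it, counterclockwise, in the order in
which its L-shape meets theirs. -/
structure LDrawing {V : Type*} (G : SimpleGraph V) extends LCorners G where
  pos : V → ℝ × ℝ
  pos_lt : ∀ {u v}, G.Adj u v → x u < x v → (pos u).2 < (pos v).2
  ccw_right : ∀ {v w w'}, G.Adj v w → G.Adj v w' → x v < x w → x w < x w' →
    0 < ccw (pos v) (pos w) (pos w')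
  ccw_left : ∀ {v w w'}, G.Adj v w → G.Adj v w' → x w < x v → x w' < x v → y w' < y w →
    0 < ccw (pos v) (pos w) (pos w')
  disjoint : ∀ {u v u' v'}, G.Adj u v → G.Adj u' v' → u ≠ u' → u ≠ v' → v ≠ u' → v ≠ v' →
    Disjoint (segment ℝ (pos u) (pos v)) (segment ℝ (pos u') (pos v'))

namespace LDrawing

section Basic

variable {V W : Type*} {G : SimpleGraph V} {H : SimpleGraph W} {v w w' : V}

/-- A drawing of `H` restricts to a drawing of a graph embedded in `H`. -/
def comap (L : LDrawing H) (f : G →g H) (hf : Function.Injective f) : LDrawing G where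
  toLCorners := L.toLCorners.comap f hf
  pos := L.pos ∘ f
  pos_lt h := L.pos_lt (f.map_adj h)
  ccw_right hw hw' := L.ccw_right (f.map_adj hw) (f.map_adj hw')
  ccw_left hw hw' := L.ccw_left (f.map_adj hw) (f.map_adj hw')
  disjoint huv huv' h₁ h₂ h₃ h₄ := L.disjoint (f.map_adj huv) (f.map_adj huv') (hf.ne h₁)
    (hf.ne h₂) (hf.ne h₃) (hf.ne h₄)

/-- A single edge, drawn vertically. -/
def edge : LDrawing (⊤ : SimpleGraph (Fin 2)) where
  x i := i.val
  y i := -i.val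
  x_injective := Nat.cast_injective.comp Fin.val_injective
  y_injective := neg_injective.comp (Nat.cast_injective.comp Fin.val_injective)
  y_lt _ h := neg_lt_neg h
  y_le := by
    simp only [neg_lt_neg_iff, neg_le_neg_iff, Nat.cast_lt, Nat.cast_le, Fin.val_fin_lt]
    omega
  pos i := (0, i.val)
  pos_lt _ h := h
  ccw_right := by
    simp only [Nat.cast_lt, Fin.val_fin_lt]
    omega
  ccw_left := by
    simp only [neg_lt_neg_iff, Nat.cast_lt, Fin.val_fin_lt]
    omega
  disjoint huv _ := by
    have := huv.ne
    omega

variable (L : LDrawing G)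

theorem angleAt_lt_angleAt (hw : G.Adj v w) (hw' : G.Adj v w') (h : L.sweep v w < L.sweep v w') :
    angleAt (L.pos v) (L.pos w) < angleAt (L.pos v) (L.pos w') := by
  rcases L.x_lt_or_gt_of_adj hw with hx | hx <;> rcases L.x_lt_or_gt_of_adj hw' with hx' | hx'
  · rw [L.sweep_of_lt hx, L.sweep_of_lt hx'] at h
    exact angleAt_lt_angleAt_of_ccw_pos (.inr (L.pos_lt hw' hx').le)
      (L.ccw_right hw hw' hx (by linarith))
  · have hpos := (L.sweep_pos_iff hw).2 hx
    exact absurd ((L.sweep_pos_iff hw').1 (hpos.trans h)) hx'.not_gt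
  · exact angleAt_lt_angleAt_of_lt_of_le (L.pos_lt hw.symm hx) (L.pos_lt hw' hx').le
  · rw [L.sweep_of_gt hx, L.sweep_of_gt hx'] at h
    exact angleAt_lt_angleAt_of_ccw_pos (.inl (L.pos_lt hw.symm hx))
      (L.ccw_left hw hw' hx hx' (by linarith))

theorem angleAt_ne_angleAt (hw : G.Adj v w) (hw' : G.Adj v w') (h : w ≠ w') :
    angleAt (L.pos v) (L.pos w) ≠ angleAt (L.pos v) (L.pos w') := by
  rcases lt_or_gt_of_ne ((L.sweep_injOn_neighborSet v).ne hw hw' h) with h | h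
  · exact (L.angleAt_lt_angleAt hw hw' h).ne
  · exact (L.angleAt_lt_angleAt hw' hw h).ne'

theorem pos_ne (h : G.Adj v w) : L.pos v ≠ L.pos w := by
  rcases L.x_lt_or_gt_of_adj h with hx | hx
  · exact ne_of_apply_ne Prod.snd (L.pos_lt h hx).ne
  · exact ne_of_apply_ne Prod.snd (L.pos_lt h.symm hx).ne'

end Basic

section Drawing

variable {V : Type} {G : SimpleGraph V} (L : LDrawing G)

theorem isPlaneDrawing (hadj : ∀ v, ∃ w, G.Adj v w) : IsPlaneDrawing G L.pos :=
  isPlaneDrawing_of_forall_adj hadj (fun _ _ => L.pos_ne) (fun _ _ _ _ => L.disjoint)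
    fun _ _ _ huv huw hvw =>
      segment_inter_segment_of_angleAt_ne (L.angleAt_ne_angleAt huv huw hvw)

theorem orderPreserving [Finite V] : OrderPreserving G L.pos L.rep :=
  orderPreserving_of_forall_lt L.rep L.crossingTime
    (fun _ _ h => ⟨L.crossingTime_mem_Icc h, L.rep_crossingTime_mem h⟩)
    fun _ _ _ hw hw' h => L.angleAt_lt_angleAt hw hw' (L.crossingTime_lt_iff.1 h)

end Drawing

section Insertion

/-- Drawing the edge from `a` towards `c` rather than to the position of `b` keeps its place among
the edges at `a` and avoids all edges not incident to `a`. -/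
structure CanReplace {V : Type*} {G : SimpleGraph V} (L : LDrawing G) (a b : V) (c : ℝ × ℝ) :
    Prop where
  ccw_pos : ∀ w, 0 < ccw (L.pos a) (L.pos b) (L.pos w) → 0 < ccw (L.pos a) c (L.pos w)
  ccw_neg : ∀ w, ccw (L.pos a) (L.pos b) (L.pos w) < 0 → ccw (L.pos a) c (L.pos w) < 0
  disjoint : ∀ u v, G.Adj u v → u ≠ a → v ≠ a →
    Disjoint (segment ℝ (L.pos a) c) (segment ℝ (L.pos u) (L.pos v))

variable {V : Type*}

theorem disjoint_segment_midpoint {G : SimpleGraph V} (L : LDrawing G) {a b u v : V}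
    (hab : G.Adj a b) (huv : G.Adj u v) (hu : u ≠ a) (hv : v ≠ a) :
    Disjoint (segment ℝ (L.pos a) (midpoint ℝ (L.pos a) (L.pos b)))
      (segment ℝ (L.pos u) (L.pos v)) := by
  have hb := right_notMem_segment_midpoint (L.pos_ne hab)
  have hsub := segment_midpoint_subset (L.pos a) (L.pos b)
  have hstar : ∀ w, G.Adj b w → w ≠ a →
      Disjoint (segment ℝ (L.pos a) (midpoint ℝ (L.pos a) (L.pos b)))
        (segment ℝ (L.pos b) (L.pos w)) := by
    intro w hbw hwa
    have hinter := segment_inter_segment_of_angleAt_ne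
      (L.angleAt_ne_angleAt hab.symm hbw hwa.symm)
    rw [segment_symm] at hinter
    refine Set.disjoint_left.2 fun z hz hz' => hb ?_
    have hzb : z = L.pos b := hinter.subset ⟨hsub hz, hz'⟩
    exact hzb ▸ hz
  by_cases hub : u = b
  · subst hub
    exact hstar v huv hv
  by_cases hvb : v = b
  · subst hvb
    rw [segment_symm ℝ (L.pos u)]
    exact hstar u huv.symm hu
  · exact (L.disjoint hab huv hu.symm hv.symm (Ne.symm hub) (Ne.symm hvb)).mono_left hsub

theorem eventually_canReplace [Finite V] {G : SimpleGraph V} (L : LDrawing G) {a b : V}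
    (hab : G.Adj a b) :
    ∀ᶠ c in 𝓝 (midpoint ℝ (L.pos a) (L.pos b)), L.CanReplace a b c := by
  have hccw (w : V) : Tendsto (fun c => ccw (L.pos a) c (L.pos w))
      (𝓝 (midpoint ℝ (L.pos a) (L.pos b))) (𝓝 (ccw (L.pos a) (L.pos b) (L.pos w) / 2)) :=
    (continuous_ccw_middle _ _).tendsto' _ _ (ccw_midpoint ..)
  have hpos : ∀ᶠ c in 𝓝 (midpoint ℝ (L.pos a) (L.pos b)),
      ∀ w, 0 < ccw (L.pos a) (L.pos b) (L.pos w) → 0 < ccw (L.pos a) c (L.pos w) := by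
    simp only [eventually_all]
    exact fun w hw => (hccw w).eventually_const_lt (half_pos hw)
  have hneg : ∀ᶠ c in 𝓝 (midpoint ℝ (L.pos a) (L.pos b)),
      ∀ w, ccw (L.pos a) (L.pos b) (L.pos w) < 0 → ccw (L.pos a) c (L.pos w) < 0 := by
    simp only [eventually_all]
    exact fun w hw => (hccw w).eventually_lt_const (by linarith)
  have hdisjoint : ∀ᶠ c in 𝓝 (midpoint ℝ (L.pos a) (L.pos b)),
      ∀ u v, G.Adj u v → u ≠ a → v ≠ a →
        Disjoint (segment ℝ (L.pos a) c) (segment ℝ (L.pos u) (L.pos v)) := by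
    simp only [eventually_all]
    exact fun u v huv hu hv => eventually_disjoint_segment (isCompact_segment _ _).isClosed
      (L.disjoint_segment_midpoint hab huv hu hv)
  filter_upwards [hpos, hneg, hdisjoint] with c h₁ h₂ h₃ using ⟨h₁, h₂, h₃⟩

/-- A position for a new vertex attached to the edge joining `a` and `b`: beside the midpoint of the
edge, on its right when it is directed from `a` to `b`. -/
structure IsInsertable {G : SimpleGraph V} (L : LDrawing G) (a b : V) (c : ℝ × ℝ) : Prop where
  left : L.CanReplace a b c
  right : L.CanReplace b a c
  mem_Ioo : c.2 ∈ Set.Ioo (L.pos a).2 (L.pos b).2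
  ccw_pos : 0 < ccw (L.pos a) c (L.pos b)

theorem exists_isInsertable [Finite V] {G : SimpleGraph V} (L : LDrawing G) {a b : V}
    (h : G.Adj a b) (hx : L.x a < L.x b) : ∃ c, L.IsInsertable a b c := by
  have hlt := L.pos_lt h hx
  have hIoo : ∀ᶠ c in 𝓝 (midpoint ℝ (L.pos a) (L.pos b)), c.2 ∈ Set.Ioo (L.pos a).2 (L.pos b).2 :=
    continuous_snd.continuousAt.eventually (isOpen_Ioo.mem_nhds (midpoint_snd_mem_Ioo hlt))
  have hright := L.eventually_canReplace h.symm
  rw [midpoint_comm] at hright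
  obtain ⟨c, hccw, hleft, hright, hmem⟩ := ((frequently_nhds_midpoint_ccw_pos hlt).and_eventually
    ((L.eventually_canReplace h).and (hright.and hIoo))).exists
  exact ⟨c, hleft, hright, hmem, hccw⟩

variable {G : SimpleGraph (Option V)} {L : LDrawing (G.comap some)} {a b : V} {c : ℝ × ℝ}
  (hc : L.IsInsertable a b c) (hG : IsAttached G a b)
include hc hG

theorem disjoint_segment {u v w : V} (hw : G.Adj none (some w)) (huv : G.Adj (some u) (some v))
    (hwu : w ≠ u) (hwv : w ≠ v) :
    Disjoint (segment ℝ c (L.pos w)) (segment ℝ (L.pos u) (L.pos v)) := by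
  rw [segment_symm]
  rcases hG.eq_or_eq hw with rfl | rfl
  · exact hc.left.disjoint u v huv hwu.symm hwv.symm
  · exact hc.right.disjoint u v huv hwu.symm hwv.symm

theorem disjoint_segment_option_elim {u v u' v' : Option V} (huv : G.Adj u v) (huv' : G.Adj u' v')
    (h₁ : u ≠ u') (h₂ : u ≠ v') (h₃ : v ≠ u') (h₄ : v ≠ v') :
    Disjoint (segment ℝ (u.elim c L.pos) (v.elim c L.pos))
      (segment ℝ (u'.elim c L.pos) (v'.elim c L.pos)) := by
  rcases u with _ | u <;> rcases v with _ | v <;> rcases u' with _ | u' <;> rcases v' with _ | v'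
  case none.some.some.some =>
    exact disjoint_segment hc hG huv huv' (by simpa using h₃) (by simpa using h₄)
  case some.none.some.some =>
    rw [segment_symm]
    exact disjoint_segment hc hG huv.symm huv' (by simpa using h₁) (by simpa using h₂)
  case some.some.none.some =>
    exact (disjoint_segment hc hG huv' huv (by simpa using h₂.symm)
      (by simpa using h₄.symm)).symm
  case some.some.some.none =>
    rw [segment_symm ℝ (Option.elim (some u') _ _)]
    exact (disjoint_segment hc hG huv'.symm huv (by simpa using h₁.symm)
      (by simpa using h₃.symm)).symm
  case some.some.some.some =>
    exact L.disjoint huv huv' (by simpa using h₁) (by simpa using h₂) (by simpa using h₃)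
      (by simpa using h₄)
  all_goals simp_all

variable (hab : L.x a < L.x b) {m n : ℝ} (hm : JustBelow L.x m (L.x b))
include hab hm

theorem ccw_option_elim_pos_right {v w w' : Option V} (hvw : G.Adj v w) (hvw' : G.Adj v w')
    (hx : v.elim m L.x < w.elim m L.x) (hx' : w.elim m L.x < w'.elim m L.x) :
    0 < ccw (v.elim c L.pos) (w.elim c L.pos) (w'.elim c L.pos) := by
  rcases v with _ | v <;> rcases w with _ | w <;> rcases w' with _ | w'
  case none.some.some =>
    obtain rfl := L.eq_right_of_adj_none hG hab hvw (hm.lt_apply_iff.1 hx)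
    obtain rfl := L.eq_right_of_adj_none hG hab hvw' (hm.lt_apply_iff.1 (hx.trans hx'))
    exact absurd hx' (lt_irrefl _)
  case some.none.some =>
    obtain rfl := L.eq_left_of_adj_none hG hvw.symm (hm.apply_lt_iff.1 hx)
    rcases (hm.lt_apply_iff.1 hx').eq_or_lt with hb | hb
    · exact L.x_injective hb ▸ hc.ccw_pos
    · exact hc.left.ccw_pos w' (L.ccw_right hG.adj hvw' hab hb)
  case some.some.none =>
    obtain rfl := L.eq_left_of_adj_none hG hvw'.symm (hm.apply_lt_iff.1 (hx.trans hx'))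
    have hwb := L.ccw_right hvw hG.adj hx (hm.apply_lt_iff.1 hx')
    rw [ccw_swap_right, neg_pos] at hwb ⊢
    exact hc.left.ccw_neg w hwb
  case some.some.some => exact L.ccw_right hvw hvw' hx hx'
  all_goals simp_all

variable (hn : JustBelow L.y n (L.y a))
include hn

theorem ccw_option_elim_pos_left {v w w' : Option V} (hvw : G.Adj v w) (hvw' : G.Adj v w')
    (hx : w.elim m L.x < v.elim m L.x) (hx' : w'.elim m L.x < v.elim m L.x)
    (hy : w'.elim n L.y < w.elim n L.y) :
    0 < ccw (v.elim c L.pos) (w.elim c L.pos) (w'.elim c L.pos) := by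
  rcases v with _ | v <;> rcases w with _ | w <;> rcases w' with _ | w'
  case none.some.some =>
    obtain rfl := L.eq_left_of_adj_none hG hvw (hm.apply_lt_iff.1 hx)
    obtain rfl := L.eq_left_of_adj_none hG hvw' (hm.apply_lt_iff.1 hx')
    exact absurd hy (lt_irrefl _)
  case some.none.some =>
    obtain rfl := L.eq_right_of_adj_none hG hab hvw.symm (hm.lt_apply_iff.1 hx)
    exact hc.right.ccw_pos w' (L.ccw_left hG.adj.symm hvw' hab hx' (hy.trans hn.lt))
  case some.some.none =>
    obtain rfl := L.eq_right_of_adj_none hG hab hvw'.symm (hm.lt_apply_iff.1 hx')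
    rcases (hn.lt_apply_iff.1 hy).eq_or_lt with ha | ha
    · exact ccw_rotate .. ▸ L.y_injective ha ▸ hc.ccw_pos
    · have hwa := L.ccw_left hvw hG.adj.symm hx hab ha
      rw [ccw_swap_right, neg_pos] at hwa ⊢
      exact hc.right.ccw_neg w hwa
  case some.some.some => exact L.ccw_left hvw hvw' hx hx' hy
  all_goals simp_all

/-- The extension of the drawing to a new vertex attached to the edge joining `a` and `b`, placed at
`c`. -/
def insert : LDrawing G where
  toLCorners := L.toLCorners.insert hG hab hm hn
  pos o := o.elim c L.pos
  pos_lt := by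
    rintro (_ | u) (_ | v) h hx
    · exact absurd h (SimpleGraph.irrefl _)
    · obtain rfl := L.eq_right_of_adj_none hG hab h (hm.lt_apply_iff.1 hx)
      exact hc.mem_Ioo.2
    · obtain rfl := L.eq_left_of_adj_none hG h.symm (hm.apply_lt_iff.1 hx)
      exact hc.mem_Ioo.1
    · exact L.pos_lt h hx
  ccw_right := ccw_option_elim_pos_right hc hG hab hm
  ccw_left := ccw_option_elim_pos_left hc hG hab hm hn
  disjoint := disjoint_segment_option_elim hc hG

end Insertion

theorem nonempty_of_iso {V W : Type*} {G : SimpleGraph V} {H : SimpleGraph W} (e : G ≃g H) :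
    Nonempty (LDrawing G) → Nonempty (LDrawing H) :=
  Nonempty.map fun L => L.comap e.symm.toHom e.symm.injective

theorem nonempty_insert {V : Type*} [Finite V] {G : SimpleGraph (Option V)} {a b : V}
    (hG : IsAttached G a b) (L : LDrawing (G.comap some)) : Nonempty (LDrawing G) := by
  wlog hab : L.x a < L.x b generalizing a b
  · exact this hG.symm ((L.x_lt_or_gt_of_adj hG.adj).resolve_left hab)
  obtain ⟨m, hm⟩ := exists_justBelow L.x (L.x b)
  obtain ⟨n, hn⟩ := exists_justBelow L.y (L.y a)
  obtain ⟨c, hc⟩ := L.exists_isInsertable hG.adj hab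
  exact ⟨insert hc hG hab hm hn⟩

theorem nonempty_of_isKTree {V : Type} {G : SimpleGraph V} (hG : IsKTree 2 G) :
    Nonempty (LDrawing G) := by
  refine hG.induction (P := fun G => Nonempty (LDrawing G)) nonempty_of_iso ⟨edge⟩ ?_
  rintro V _ G hcard hclique ⟨L⟩
  obtain ⟨a, b, hab⟩ := exists_isAttached hcard hclique
  exact nonempty_insert hab L

end LDrawing

/-- Every partial 2-tree (series-parallel graph) has, for some straight-line plane drawing,
an order-preserving 1-string representation in which every arc is an L-shape. -/
theorem stmt_4 {V : Type} [Fintype V] (G : SimpleGraph V) (h : IsPartialTwoTree G) :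
    ∃ p : V → ℝ × ℝ, IsPlaneDrawing G p ∧
      ∃ R : OneStringRep G,
        (∀ v : V, IsLShape (R.γ v)) ∧
        OrderPreserving G p R := by
  obtain ⟨W, H, hH, g, hg⟩ := h
  obtain ⟨L⟩ := LDrawing.nonempty_of_isKTree hH
  let f : G →g H := ⟨g, hg _ _⟩
  let LG : LDrawing G := L.comap f g.injective
  exact ⟨LG.pos, (L.isPlaneDrawing (hH.exists_adj le_rfl)).comap f g.injective,
    LG.rep, LG.isLShape_rep, LG.orderPreserving⟩
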